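/- Let S be a set of 2k points in the plane in general position. Then the number of non-crossing perfect matchings of S is at least the k-th Catalan number: pm(S) ≥ C_k. -/

import Mathlib

open scoped Classical

/-- Points in the plane. -/
abbrev Pt : Type := ℝ × ℝ

/-- A finite planar point set is in *general position* if no three of its
points are collinear. -/
def GeneralPosition (S : Finset Pt) : Prop :=
  ∀ p ∈ S, ∀ q ∈ S, ∀ r ∈ S, p ≠ q → p ≠ r → q ≠ r →
    ¬ Collinear ℝ ({p, q, r} : Set Pt)

/-- The closed straight-line segment spanned by an unordered pair of points. -/
noncomputable def seg : Sym2 Pt → Set Pt :=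
  Sym2.lift ⟨fun a b => segment ℝ a b, fun a b => segment_symm ℝ a b⟩

/-- `M` is a non-crossing perfect matching of `S`: a partition of `S` into
unordered pairs (of distinct points) whose closed segments are pairwise disjoint. -/
def IsNCMatching (S : Finset Pt) (M : Finset (Sym2 Pt)) : Prop :=
  (∀ e ∈ M, ¬ e.IsDiag) ∧
  (∀ e ∈ M, ∀ p, p ∈ e → p ∈ S) ∧
  (∀ p ∈ S, ∃! e, e ∈ M ∧ p ∈ e) ∧
  (∀ e ∈ M, ∀ f ∈ M, e ≠ f → Disjoint (seg e) (seg f))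

/-- The number of non-crossing perfect matchings of `S`. -/
noncomputable def pm (S : Finset Pt) : ℕ :=
  Set.ncard {M : Finset (Sym2 Pt) | IsNCMatching S M}

/-- `S` is in convex position: no point of `S` lies in the convex hull of the
other points. -/
def ConvexPosition (S : Finset Pt) : Prop :=
  ∀ p ∈ S, p ∉ convexHull ℝ (↑(S.erase p) : Set Pt)

/-- The signed side of `X` with respect to the directed line from `Q` to `P`.
The two open half-planes bounded by the line through `Q` and `P` are
`{X | 0 < sideOf Q P X}` and `{X | sideOf Q P X < 0}`. -/
def sideOf (Q P X : Pt) : ℝ :=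
  (P.1 - Q.1) * (X.2 - Q.2) - (P.2 - Q.2) * (X.1 - Q.1)

/-- Segment `AB` pierces segment `CD`: the closed segments are disjoint, but the
affine line through `A` and `B` meets the closed segment `CD`. -/
def Pierces (A B C D : Pt) : Prop :=
  Disjoint (segment ℝ A B) (segment ℝ C D) ∧
  ((affineSpan ℝ ({A, B} : Set Pt) : Set Pt) ∩ segment ℝ C D).Nonempty

/-- The matching `M` of `S` has the *piercing property*: it contains pairs
`{A,B}` and `{C,D}` with `A` on the boundary of the convex hull of `S`
and `AB` piercing `CD`. -/
def HasPiercing (S : Finset Pt) (M : Finset (Sym2 Pt)) : Prop :=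
  ∃ A B C D : Pt, s(A, B) ∈ M ∧ s(C, D) ∈ M ∧
    A ∈ frontier (convexHull ℝ (S : Set Pt)) ∧ Pierces A B C D

/-- The exceptional order type with interior point `Q`: `Q` is the unique point
of `S` interior to the convex hull of `S`, and for every other point `P` of `S`
each open half-plane bounded by the line through `Q` and `P` contains exactly
two points of `S`. -/
def ExceptionalAt (S : Finset Pt) (Q : Pt) : Prop :=
  (↑S ∩ interior (convexHull ℝ (S : Set Pt))) = {Q} ∧
  ∀ P ∈ S, P ≠ Q →
    (S.filter (fun X => 0 < sideOf Q P X)).card = 2 ∧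
    (S.filter (fun X => sideOf Q P X < 0)).card = 2

/-- The exceptional order type of Figure 1. -/
def Exceptional (S : Finset Pt) : Prop :=
  ∃ Q ∈ S, ExceptionalAt S Q

/-!
Let `A` be the lexicographically smallest point of `S`. Around `A` the other points are linearly
ordered by angle, so for each `i < k` there is a point `P` having exactly `2 * i` points of `S` to
the right of the directed line `AP`, hence `2 * (k - 1 - i)` points to its left. Matching `A` with
`P`, and the two sides independently, yields non-crossing matchings, which are distinct for distinct
`P`. Thus `pm S` satisfies, as an inequality, the recursion that defines the Catalan numbers.
-/

open Finset

section Rank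

variable {α : Type*} {r : α → α → Prop} {T : Finset α}

lemma card_filter_rel_lt_card_filter_rel (hirrefl : ∀ a ∈ T, ¬ r a a)
    (htrans : ∀ a ∈ T, ∀ b ∈ T, ∀ c ∈ T, r a b → r b c → r a c)
    {a b : α} (ha : a ∈ T) (hb : b ∈ T) (hab : r a b) :
    #{x ∈ T | r x a} < #{x ∈ T | r x b} := by
  refine card_lt_card (ssubset_iff_of_subset ?_ |>.2 ⟨a, by simp [ha, hab], by simp [hirrefl a ha]⟩)
  intro x hx
  rw [mem_filter] at hx ⊢
  exact ⟨hx.1, htrans x hx.1 a ha b hb hx.2 hab⟩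

lemma surjOn_card_filter_rel (hirrefl : ∀ a ∈ T, ¬ r a a)
    (htrans : ∀ a ∈ T, ∀ b ∈ T, ∀ c ∈ T, r a b → r b c → r a c)
    (htotal : ∀ a ∈ T, ∀ b ∈ T, a ≠ b → r a b ∨ r b a) :
    Set.SurjOn (fun a ↦ #{x ∈ T | r x a}) T (range #T) := by
  have rank_lt {a b : α} (ha : a ∈ T) (hb : b ∈ T) (hab : r a b) :=
    card_filter_rel_lt_card_filter_rel hirrefl htrans ha hb hab
  refine surjOn_of_injOn_of_card_le _ ?_ ?_ (card_range _).le
  · intro a ha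
    exact mem_coe.2 (mem_range.2 (card_lt_card (filter_ssubset.2 ⟨a, ha, hirrefl a ha⟩)))
  · intro a ha b hb hrank
    by_contra hne
    rcases htotal a ha b hb hne with hab | hba
    · exact (rank_lt ha hb hab).ne hrank
    · exact (rank_lt hb ha hba).ne' hrank

end Rank

/-! ### Sides of a line -/

section Sides

variable {A P U V W X Y : Pt}

lemma sideOf_left (A P : Pt) : sideOf A P A = 0 := by simp [sideOf]

lemma sideOf_right (A P : Pt) : sideOf A P P = 0 := by simp only [sideOf]; ring

lemma sideOf_swap (A X Y : Pt) : sideOf A Y X = -sideOf A X Y := by simp only [sideOf]; ring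

lemma sideOf_smul_add_smul (A P X Y : Pt) {a b : ℝ} (hab : a + b = 1) :
    sideOf A P (a • X + b • Y) = a • sideOf A P X + b • sideOf A P Y := by
  obtain rfl : b = 1 - a := by linarith
  simp only [sideOf, Prod.fst_add, Prod.snd_add, Prod.smul_fst, Prod.smul_snd, smul_eq_mul]
  ring

lemma convex_preimage_sideOf (A P : Pt) {I : Set ℝ} (hI : Convex ℝ I) :
    Convex ℝ (sideOf A P ⁻¹' I) := by
  intro X hX Y hY a b ha hb hab
  rw [Set.mem_preimage, sideOf_smul_add_smul A P X Y hab]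
  exact hI hX hY ha hb hab

lemma disjoint_convexHull_of_sideOf {S T : Set Pt} {I J : Set ℝ} (hI : Convex ℝ I)
    (hJ : Convex ℝ J) (hIJ : Disjoint I J) (hS : ∀ X ∈ S, sideOf A P X ∈ I)
    (hT : ∀ X ∈ T, sideOf A P X ∈ J) : Disjoint (convexHull ℝ S) (convexHull ℝ T) :=
  (hIJ.preimage (sideOf A P)).mono (convexHull_min hS (convex_preimage_sideOf A P hI))
    (convexHull_min hT (convex_preimage_sideOf A P hJ))

lemma collinear_of_sideOf_eq_zero (h : sideOf A X Y = 0) : Collinear ℝ {A, X, Y} := by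
  rcases eq_or_ne X A with rfl | hne
  · simpa using collinear_pair ℝ X Y
  have hnorm : (X.1 - A.1) ^ 2 + (X.2 - A.2) ^ 2 ≠ 0 := by
    intro h0
    exact hne (Prod.ext (by nlinarith) (by nlinarith))
  rw [collinear_iff_of_mem (p₀ := A) (by simp)]
  simp only [sideOf] at h
  refine ⟨X - A, ?_⟩
  rintro Z (rfl | rfl | rfl)
  · exact ⟨0, by simp⟩
  · exact ⟨1, by simp⟩
  -- The coefficient of the orthogonal projection of `Z - A` onto `X - A`.
  · refine ⟨((X.1 - A.1) * (Z.1 - A.1) + (X.2 - A.2) * (Z.2 - A.2)) /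
      ((X.1 - A.1) ^ 2 + (X.2 - A.2) ^ 2), Prod.ext ?_ ?_⟩
    · simp only [vadd_eq_add, Prod.fst_add, Prod.smul_fst, Prod.fst_sub, smul_eq_mul]
      field_simp
      linear_combination -(X.2 - A.2) * h
    · simp only [vadd_eq_add, Prod.snd_add, Prod.smul_snd, Prod.snd_sub, smul_eq_mul]
      field_simp
      linear_combination (X.1 - A.1) * h

lemma fst_lt_of_sideOf_pos (hU : toLex A < toLex U) (hV : toLex A < toLex V)
    (h : 0 < sideOf A U V) : A.1 < U.1 := by
  rw [Prod.Lex.toLex_lt_toLex] at hU hV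
  rcases hU with hU | ⟨hU₁, hU₂⟩
  · exact hU
  · have hV₁ : A.1 ≤ V.1 := hV.elim le_of_lt fun hV ↦ hV.1.le
    rw [sideOf, ← hU₁, sub_self, zero_mul, zero_sub] at h
    exact absurd h (neg_nonpos.2
      (mul_nonneg (sub_nonneg.2 hU₂.le) (sub_nonneg.2 hV₁))).not_gt

lemma sideOf_pos_trans (hU : toLex A < toLex U) (hV : toLex A < toLex V)
    (hW : toLex A < toLex W) (hUV : 0 < sideOf A U V) (hVW : 0 < sideOf A V W) :
    0 < sideOf A U W := by
  have hU₁ : 0 < U.1 - A.1 := sub_pos.2 (fst_lt_of_sideOf_pos hU hV hUV)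
  have hV₁ : 0 < V.1 - A.1 := sub_pos.2 (fst_lt_of_sideOf_pos hV hW hVW)
  have hW₁ : 0 ≤ W.1 - A.1 := by
    rw [Prod.Lex.toLex_lt_toLex] at hW
    exact sub_nonneg.2 (hW.elim le_of_lt fun hW ↦ hW.1.le)
  have three_term : (V.1 - A.1) * sideOf A U W =
      (U.1 - A.1) * sideOf A V W + (W.1 - A.1) * sideOf A U V := by
    simp only [sideOf]; ring
  refine pos_of_mul_pos_right ?_ hV₁.le
  rw [three_term]
  positivity

end Sides

section GeneralPosition

variable {S T : Finset Pt} {A P X : Pt}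

lemma GeneralPosition.mono (hS : GeneralPosition S) (hTS : T ⊆ S) : GeneralPosition T :=
  fun p hp q hq r hr ↦ hS p (hTS hp) q (hTS hq) r (hTS hr)

lemma GeneralPosition.sideOf_ne_zero (hS : GeneralPosition S) (hA : A ∈ S) (hP : P ∈ S)
    (hX : X ∈ S) (hAP : A ≠ P) (hAX : A ≠ X) (hPX : P ≠ X) : sideOf A P X ≠ 0 :=
  fun h ↦ hS A hA P hP X hX hAP hAX hPX (collinear_of_sideOf_eq_zero h)

/-- The points of `S` strictly to the right of the directed line from `A` to `P`. -/
noncomputable def rightOf (S : Finset Pt) (A P : Pt) : Finset Pt := {X ∈ S | sideOf A P X < 0}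

/-- The points of `S` strictly to the left of the directed line from `A` to `P`. -/
noncomputable def leftOf (S : Finset Pt) (A P : Pt) : Finset Pt := {X ∈ S | 0 < sideOf A P X}

lemma mem_rightOf : X ∈ rightOf S A P ↔ X ∈ S ∧ sideOf A P X < 0 := mem_filter

lemma mem_leftOf : X ∈ leftOf S A P ↔ X ∈ S ∧ 0 < sideOf A P X := mem_filter

lemma rightOf_subset : rightOf S A P ⊆ S := filter_subset _ _

lemma leftOf_subset : leftOf S A P ⊆ S := filter_subset _ _

lemma sideOf_eq_zero_of_mem_pair (hX : X ∈ ({A, P} : Finset Pt)) : sideOf A P X = 0 := by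
  rcases mem_insert.1 hX with rfl | hX
  · exact sideOf_left _ _
  · rw [mem_singleton.1 hX, sideOf_right]

lemma GeneralPosition.rightOf_union_pair_union_leftOf (hS : GeneralPosition S) (hA : A ∈ S)
    (hP : P ∈ S) (hAP : A ≠ P) : rightOf S A P ∪ ({A, P} ∪ leftOf S A P) = S := by
  refine Subset.antisymm ?_ fun X hX ↦ ?_
  · exact union_subset rightOf_subset
      (union_subset (insert_subset hA (singleton_subset_iff.2 hP)) leftOf_subset)
  · by_cases hXA : X = A
    · simp [hXA]
    by_cases hXP : X = P
    · simp [hXP]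
    rcases (hS.sideOf_ne_zero hA hP hX hAP (Ne.symm hXA) (Ne.symm hXP)).lt_or_gt with h | h
    · exact mem_union_left _ (mem_rightOf.2 ⟨hX, h⟩)
    · exact mem_union_right _ (mem_union_right _ (mem_leftOf.2 ⟨hX, h⟩))

lemma disjoint_convexHull_pair_leftOf :
    Disjoint (convexHull ℝ (({A, P} : Finset Pt) : Set Pt))
      (convexHull ℝ (leftOf S A P : Set Pt)) :=
  disjoint_convexHull_of_sideOf (convex_singleton 0) (convex_Ioi 0) (by simp)
    (fun _ hX ↦ sideOf_eq_zero_of_mem_pair hX) fun _ hX ↦ (mem_leftOf.1 hX).2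

lemma disjoint_convexHull_rightOf_pair_union_leftOf :
    Disjoint (convexHull ℝ (rightOf S A P : Set Pt))
      (convexHull ℝ (({A, P} ∪ leftOf S A P : Finset Pt) : Set Pt)) :=
  disjoint_convexHull_of_sideOf (convex_Iio 0) (convex_Ici 0)
    (Set.Iio_disjoint_Ici le_rfl) (fun _ hX ↦ (mem_rightOf.1 hX).2)
    fun _ hX ↦ (mem_union.1 hX).elim (fun h ↦ (sideOf_eq_zero_of_mem_pair h).ge)
      fun h ↦ (mem_leftOf.1 h).2.le

lemma disjoint_of_disjoint_convexHull
    (h : Disjoint (convexHull ℝ (S : Set Pt)) (convexHull ℝ (T : Set Pt))) : Disjoint S T :=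
  disjoint_coe.1 (h.mono (subset_convexHull ℝ _) (subset_convexHull ℝ _))

lemma GeneralPosition.card_rightOf_add_card_leftOf (hS : GeneralPosition S) (hA : A ∈ S)
    (hP : P ∈ S) (hAP : A ≠ P) : #(rightOf S A P) + #(leftOf S A P) + 2 = #S := by
  have hcard := congrArg card (hS.rightOf_union_pair_union_leftOf hA hP hAP)
  rw [card_union_of_disjoint
      (disjoint_of_disjoint_convexHull disjoint_convexHull_rightOf_pair_union_leftOf),
    card_union_of_disjoint (disjoint_of_disjoint_convexHull disjoint_convexHull_pair_leftOf),
    card_pair hAP] at hcard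
  omega

lemma rightOf_eq_filter_erase :
    rightOf S A P = {X ∈ S.erase A | 0 < sideOf A X P} := by
  ext X
  rw [mem_rightOf, mem_filter, mem_erase, sideOf_swap A P X, neg_pos, and_assoc]
  refine ⟨fun h ↦ ⟨?_, h⟩, fun h ↦ h.2⟩
  rintro rfl
  exact (sideOf_left X P).not_lt h.2

lemma GeneralPosition.exists_card_rightOf_and_card_leftOf (hS : GeneralPosition S) (hA : A ∈ S)
    (hmin : ∀ X ∈ S, toLex A ≤ toLex X) {i j : ℕ} (hij : i + j + 2 = #S) :
    ∃ P ∈ S.erase A, #(rightOf S A P) = i ∧ #(leftOf S A P) = j := by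
  have hlt {X : Pt} (hX : X ∈ S.erase A) : toLex A < toLex X :=
    (hmin X (mem_of_mem_erase hX)).lt_of_ne (toLex.injective.ne (ne_of_mem_erase hX).symm)
  have hrank := surjOn_card_filter_rel (T := S.erase A) (r := fun X Y ↦ 0 < sideOf A X Y)
    (fun X _ ↦ (sideOf_right A X).not_gt)
    (fun U hU V hV W hW ↦ sideOf_pos_trans (hlt hU) (hlt hV) (hlt hW))
    fun X hX Y hY hXY ↦ by
      rw [sideOf_swap A X Y, neg_pos, or_comm]
      exact (hS.sideOf_ne_zero hA (mem_of_mem_erase hX) (mem_of_mem_erase hY)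
        (ne_of_mem_erase hX).symm (ne_of_mem_erase hY).symm hXY).lt_or_gt
  have hi : i ∈ (range #(S.erase A) : Set ℕ) := by
    rw [mem_coe, mem_range, card_erase_of_mem hA]
    omega
  obtain ⟨P, hP, hright : #_ = i⟩ := hrank hi
  rw [← rightOf_eq_filter_erase] at hright
  have hcard := hS.card_rightOf_add_card_leftOf hA (mem_of_mem_erase hP) (ne_of_mem_erase hP).symm
  exact ⟨P, hP, hright, by omega⟩

end GeneralPosition

/-! ### Non-crossing matchings -/

namespace IsNCMatching

variable {S T : Finset Pt} {M M' N N' : Finset (Sym2 Pt)} {A P : Pt} {e : Sym2 Pt}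

lemma subset_sym2 (hM : IsNCMatching S M) : M ⊆ S.sym2 :=
  fun e he ↦ mem_sym2_iff.2 (hM.2.1 e he)

lemma seg_subset_convexHull (hM : IsNCMatching S M) (he : e ∈ M) :
    seg e ⊆ convexHull ℝ (S : Set Pt) := by
  induction e using Sym2.ind with
  | _ X Y =>
    exact segment_subset_convexHull (hM.2.1 _ he X (Sym2.mem_mk_left X Y))
      (hM.2.1 _ he Y (Sym2.mem_mk_right X Y))

lemma pair (hAP : A ≠ P) : IsNCMatching {A, P} {s(A, P)} := by
  refine ⟨by simpa using hAP, by simp, fun X hX ↦ ⟨s(A, P), by simpa using hX, ?_⟩, ?_⟩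
  · exact fun e he ↦ mem_singleton.1 he.1
  · simp

lemma existsUnique_mem_union (hM : IsNCMatching S M) (hN : IsNCMatching T N)
    (hST : Disjoint S T) {X : Pt} (hX : X ∈ S) : ∃! e, e ∈ M ∪ N ∧ X ∈ e := by
  obtain ⟨e, ⟨he, hXe⟩, huniq⟩ := hM.2.2.1 X hX
  refine ⟨e, ⟨mem_union_left _ he, hXe⟩, ?_⟩
  rintro f ⟨hf, hXf⟩
  rcases mem_union.1 hf with hf | hf
  · exact huniq f ⟨hf, hXf⟩
  · exact absurd (hN.2.1 f hf X hXf) (disjoint_left.1 hST hX)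

lemma union (hM : IsNCMatching S M) (hN : IsNCMatching T N)
    (hST : Disjoint (convexHull ℝ (S : Set Pt)) (convexHull ℝ (T : Set Pt))) :
    IsNCMatching (S ∪ T) (M ∪ N) := by
  have hST' : Disjoint S T := disjoint_of_disjoint_convexHull hST
  have hseg {e f : Sym2 Pt} (he : e ∈ M) (hf : f ∈ N) : Disjoint (seg e) (seg f) :=
    hST.mono (hM.seg_subset_convexHull he) (hN.seg_subset_convexHull hf)
  refine ⟨fun e he ↦ ?_, fun e he X hX ↦ ?_, fun X hX ↦ ?_, fun e he f hf hef ↦ ?_⟩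
  · exact (mem_union.1 he).elim (hM.1 e) (hN.1 e)
  · exact mem_union.2 ((mem_union.1 he).imp (hM.2.1 e · X hX) (hN.2.1 e · X hX))
  · rcases mem_union.1 hX with hX | hX
    · exact hM.existsUnique_mem_union hN hST' hX
    · rw [union_comm]
      exact hN.existsUnique_mem_union hM hST'.symm hX
  · rcases mem_union.1 he with he | he <;> rcases mem_union.1 hf with hf | hf
    · exact hM.2.2.2 e he f hf hef
    · exact hseg he hf
    · exact (hseg hf he).symm
    · exact hN.2.2.2 e he f hf hef

lemma union_inter_sym2 (hM : IsNCMatching S M) (hN : IsNCMatching T N) (hST : Disjoint S T) :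
    (M ∪ N) ∩ S.sym2 = M := by
  have hN_inter : N ∩ S.sym2 = ∅ := by
    refine eq_empty_of_forall_notMem fun e he ↦ ?_
    obtain ⟨heN, heS⟩ := mem_inter.1 he
    exact disjoint_left.1 hST (mem_sym2_iff.1 heS _ e.out_fst_mem)
      (hN.2.1 e heN _ e.out_fst_mem)
  rw [union_inter_distrib_right, hN_inter, union_empty, inter_eq_left.2 hM.subset_sym2]

lemma union_inj (hM : IsNCMatching S M) (hM' : IsNCMatching S M') (hN : IsNCMatching T N)
    (hN' : IsNCMatching T N') (hST : Disjoint S T) : M ∪ N = M' ∪ N' ↔ M = M' ∧ N = N' := by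
  refine ⟨fun h ↦ ⟨?_, ?_⟩, fun h ↦ by rw [h.1, h.2]⟩
  · rw [← hM.union_inter_sym2 hN hST, h, hM'.union_inter_sym2 hN' hST]
  · rw [← hN.union_inter_sym2 hM hST.symm, union_comm, h, union_comm,
      hN'.union_inter_sym2 hM' hST.symm]

end IsNCMatching

/-! ### Counting non-crossing matchings -/

section Counting

variable {S : Finset Pt} {M : Finset (Sym2 Pt)} {A P : Pt}

/-- The non-crossing perfect matchings of `S` as a finite set, whose cardinality is `pm S`. -/
noncomputable def ncMatchings (S : Finset Pt) : Finset (Finset (Sym2 Pt)) :=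
  {M ∈ S.sym2.powerset | IsNCMatching S M}

lemma mem_ncMatchings : M ∈ ncMatchings S ↔ IsNCMatching S M := by
  rw [ncMatchings, mem_filter, mem_powerset]
  exact and_iff_right_of_imp IsNCMatching.subset_sym2

lemma card_ncMatchings (S : Finset Pt) : #(ncMatchings S) = pm S := by
  rw [pm, ← Set.ncard_coe_finset]
  congr 1
  ext M
  exact mem_ncMatchings

lemma pm_empty : pm ∅ = 1 := by
  rw [← card_ncMatchings, card_eq_one]
  refine ⟨∅, eq_singleton_iff_unique_mem.2 ⟨?_, fun M hM ↦ ?_⟩⟩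
  · simp [mem_ncMatchings, IsNCMatching]
  · exact subset_empty.1 (mem_ncMatchings.1 hM).subset_sym2

lemma GeneralPosition.pm_mul_pm_le_card_filter (hS : GeneralPosition S) (hA : A ∈ S)
    (hP : P ∈ S) (hAP : A ≠ P) :
    pm (rightOf S A P) * pm (leftOf S A P) ≤ #{M ∈ ncMatchings S | s(A, P) ∈ M} := by
  have hpair := IsNCMatching.pair hAP
  have hleft := disjoint_convexHull_pair_leftOf (S := S) (A := A) (P := P)
  have hright := disjoint_convexHull_rightOf_pair_union_leftOf (S := S) (A := A) (P := P)
  rw [← card_ncMatchings, ← card_ncMatchings, ← card_product]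
  refine card_le_card_of_injOn (fun x ↦ x.1 ∪ ({s(A, P)} ∪ x.2)) ?_ ?_
  · rintro ⟨M, N⟩ hMN
    simp only [mem_coe, mem_product, mem_filter, mem_ncMatchings] at hMN ⊢
    refine ⟨?_, by simp⟩
    rw [← hS.rightOf_union_pair_union_leftOf hA hP hAP]
    exact hMN.1.union (hpair.union hMN.2 hleft) hright
  · rintro ⟨M, N⟩ hMN ⟨M', N'⟩ hMN' heq
    simp only [mem_coe, mem_product, mem_ncMatchings] at hMN hMN'
    obtain ⟨hMM', hNN'⟩ := (hMN.1.union_inj hMN'.1 (hpair.union hMN.2 hleft)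
      (hpair.union hMN'.2 hleft) (disjoint_of_disjoint_convexHull hright)).1 heq
    rw [hpair.union_inj hpair hMN.2 hMN'.2 (disjoint_of_disjoint_convexHull hleft)] at hNN'
    exact Prod.ext hMM' hNN'.2

lemma sum_card_filter_mem_le_pm (hA : A ∈ S) (T : Finset Pt) :
    ∑ P ∈ T, #{M ∈ ncMatchings S | s(A, P) ∈ M} ≤ pm S := by
  rw [← card_biUnion, ← card_ncMatchings]
  · exact card_le_card (biUnion_subset.2 fun P _ ↦ filter_subset _ _)
  · intro P _ Q _ hPQ
    refine disjoint_left.2 fun M hMP hMQ ↦ hPQ ?_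
    obtain ⟨hM, hAP⟩ := mem_filter.1 hMP
    have hAQ := (mem_filter.1 hMQ).2
    exact Sym2.congr_right.1 (((mem_ncMatchings.1 hM).2.2.1 A hA).unique
      ⟨hAP, Sym2.mem_mk_left A P⟩ ⟨hAQ, Sym2.mem_mk_left A Q⟩)

lemma GeneralPosition.sum_pm_mul_pm_le_pm (hS : GeneralPosition S) (hA : A ∈ S) :
    ∑ P ∈ S.erase A, pm (rightOf S A P) * pm (leftOf S A P) ≤ pm S :=
  (sum_le_sum fun _ hP ↦ hS.pm_mul_pm_le_card_filter hA (mem_of_mem_erase hP)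
    (ne_of_mem_erase hP).symm).trans (sum_card_filter_mem_le_pm hA _)

end Counting

/-- Any set `S` of `2k` points in general position has at least
`C_k` non-crossing perfect matchings. -/
theorem catalan_le_pm (k : ℕ) (S : Finset Pt) (hcard : S.card = 2 * k)
    (hgp : GeneralPosition S) :
    catalan k ≤ pm S := by
  induction k using Nat.strong_induction_on generalizing S with
  | _ k ih =>
    obtain _ | n := k
    · rw [card_eq_zero.1 hcard, pm_empty, catalan_zero]
    obtain ⟨A, hA, hmin⟩ := S.exists_min_image toLex (card_pos.1 (by omega))
    have hsplit (i : Fin n.succ) :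
        ∃ P ∈ S.erase A, #(rightOf S A P) = 2 * i ∧ #(leftOf S A P) = 2 * (n - i) :=
      hgp.exists_card_rightOf_and_card_leftOf hA hmin (by omega)
    choose P hP hright hleft using hsplit
    have hinj : Function.Injective P := fun i j hij ↦ by
      have := (hright i).symm.trans (hij ▸ hright j)
      omega
    calc catalan (n + 1) = ∑ i : Fin n.succ, catalan i * catalan (n - i) := catalan_succ n
      _ ≤ ∑ i, pm (rightOf S A (P i)) * pm (leftOf S A (P i)) := sum_le_sum fun i _ ↦
        Nat.mul_le_mul (ih i i.2 _ (hright i) (hgp.mono rightOf_subset))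
          (ih (n - i) (by omega) _ (hleft i) (hgp.mono leftOf_subset))
      _ = ∑ Q ∈ univ.image P, pm (rightOf S A Q) * pm (leftOf S A Q) := by
        rw [sum_image hinj.injOn]
      _ ≤ ∑ Q ∈ S.erase A, pm (rightOf S A Q) * pm (leftOf S A Q) :=
        sum_le_sum_of_subset (image_subset_iff.2 fun i _ ↦ hP i)
      _ ≤ pm S := hgp.sum_pm_mul_pm_le_pm hA
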